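/- Let S = ℂ[x_0, …, x_n], let I ⊆ S be a homogeneous ideal, let d ≥ 2 be an integer, let c = h_I(d), and let (ε_d, …, ε_1) be the Macaulay expansion of c in base d. Then h_I(d−1) ≥ c_{*d} = Σ_{i=2}^d C(i+ε_i−1, i−1). Moreover, if ε_1 ≥ 0 then the strict inequality h_I(d−1) > c_{*d} holds. -/

import Mathlib

open MvPolynomial

/-- An ideal of `ℂ[x_0,…,x_n]` is homogeneous if it contains all homogeneous
components of its elements. -/
def IsHomogeneousIdeal {n : ℕ} (I : Ideal (MvPolynomial (Fin (n + 1)) ℂ)) : Prop :=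
  ∀ f ∈ I, ∀ k : ℕ, homogeneousComponent k f ∈ I

/-- The Hilbert function of an ideal `I ⊆ ℂ[x_0,…,x_n]`:
`h_I(k) = dim S_k - dim (I ∩ S_k)`. -/
noncomputable def hilbertFn {n : ℕ} (I : Ideal (MvPolynomial (Fin (n + 1)) ℂ))
    (k : ℕ) : ℕ :=
  Module.finrank ℂ (homogeneousSubmodule (Fin (n + 1)) ℂ k) -
    Module.finrank ℂ
      (Submodule.restrictScalars ℂ I ⊓ homogeneousSubmodule (Fin (n + 1)) ℂ k :
        Submodule ℂ (MvPolynomial (Fin (n + 1)) ℂ))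

/-- `ε` (restricted to indices `1,…,d`) is the Macaulay expansion of `c` in base `d`. -/
def IsMacaulayExpansion (c d : ℕ) (ε : ℕ → ℤ) : Prop :=
  (∀ i, 1 ≤ i → i ≤ d → (-1 : ℤ) ≤ ε i) ∧
  (∀ i j, 1 ≤ i → i ≤ j → j ≤ d → ε i ≤ ε j) ∧
  c = ∑ i ∈ Finset.Icc 1 d, (((i : ℤ) + ε i).toNat).choose i

/-!
Let `S = K[σ]` with `K` infinite, let `c = h_I(d)` and let `c_{<d>} = ∑ i, C(i + ε_i - 1, i)` be
Green's function. The duals of the graded pieces of `S/I` form the inverse system of `I`, on which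
the linear forms act by contraction. Green's restriction theorem, which is linear algebra on this
system, provides a linear form `ℓ` for which the kernel of contraction by `ℓ` in degree `d` has
dimension at most `c_{<d>}`. The image lies in degree `d - 1`, so `h_I(d - 1) ≥ c - c_{<d>}`, and by
Pascal's rule the right-hand side is `c_{*d}`, plus `1` if `ε_1 ≥ 0`.
-/

/-- Green's function `c ↦ c_{<d>}`: if `c = ∑ i, C(i + ε_i, i)` is the Macaulay expansion of `c` in
base `d`, then `c_{<d>} = ∑ i, C(i + ε_i - 1, i)`. It is defined by the greedy algorithm: the
leading term of the expansion of `c` in base `d + 1` is `C(N, d + 1)` for the largest `N` with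
`C(N, d + 1) ≤ c`, and any such `N` is at most `c + d` (up to terms that vanish). The convention
`c_{<0>} = c` lets inductions on `d` start at `0`. -/
def greenBound : ℕ → ℕ → ℕ
  | 0, c => c
  | d + 1, c =>
    let N := Nat.findGreatest (fun N ↦ N.choose (d + 1) ≤ c) (c + d)
    (N - 1).choose (d + 1) + greenBound d (c - N.choose (d + 1))

section GreenBound

variable {d N r a b c : ℕ}

theorem le_choose_succ_add (n d : ℕ) : n ≤ n.choose (d + 1) + d := by
  induction n with
  | zero => exact Nat.zero_le _
  | succ n ih =>
    rw [Nat.choose_succ_succ']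
    rcases lt_or_ge n d with h | h
    · omega
    · have := Nat.choose_pos h
      omega

theorem greenBound_choose_add_of_lt (hr : r < (N + 1).choose d) :
    greenBound (d + 1) ((N + 1).choose (d + 1) + r) = N.choose (d + 1) + greenBound d r := by
  have leading_term : Nat.findGreatest (fun M ↦ M.choose (d + 1) ≤ (N + 1).choose (d + 1) + r)
      ((N + 1).choose (d + 1) + r + d) = N + 1 := by
    rw [Nat.findGreatest_eq_iff]
    refine ⟨?_, fun _ ↦ Nat.le_add_right _ _, fun M hM _ hle ↦ ?_⟩
    · have := le_choose_succ_add (N + 1) d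
      omega
    · have := Nat.choose_le_choose (d + 1) (show N + 1 + 1 ≤ M from hM)
      rw [Nat.choose_succ_succ'] at this
      omega
  simp only [greenBound, leading_term, Nat.add_sub_cancel, Nat.add_sub_cancel_left]

theorem greenBound_zero_right (d : ℕ) : greenBound d 0 = 0 := by
  induction d with
  | zero => rfl
  | succ d ih =>
    cases d with
    | zero => simp [greenBound]
    | succ d =>
      have : 0 < (d + 1).choose (d + 1) := by simp
      simpa [ih, Nat.choose_eq_zero_of_lt] using greenBound_choose_add_of_lt this

theorem greenBound_choose (d N : ℕ) : greenBound d ((N + 1).choose d) = N.choose d := by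
  cases d with
  | zero => simp [greenBound]
  | succ d =>
    rcases le_or_gt d (N + 1) with h | h
    · simpa [greenBound_zero_right] using greenBound_choose_add_of_lt (Nat.choose_pos h)
    · rw [Nat.choose_eq_zero_of_lt (by omega), Nat.choose_eq_zero_of_lt (by omega),
        greenBound_zero_right]

theorem greenBound_choose_add (hr : r ≤ (N + 1).choose d) :
    greenBound (d + 1) ((N + 1).choose (d + 1) + r) = N.choose (d + 1) + greenBound d r := by
  rcases hr.lt_or_eq with h | rfl
  · exact greenBound_choose_add_of_lt h
  · calc greenBound (d + 1) ((N + 1).choose (d + 1) + (N + 1).choose d)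
        = greenBound (d + 1) ((N + 1 + 1).choose (d + 1)) := by
          rw [Nat.choose_succ_succ' (N + 1), Nat.add_comm (Nat.choose _ _)]
      _ = N.choose (d + 1) + N.choose d := by
          rw [greenBound_choose, Nat.choose_succ_succ', add_comm]
      _ = N.choose (d + 1) + greenBound d ((N + 1).choose d) := by rw [greenBound_choose]

theorem exists_eq_choose_add (d : ℕ) (hc : 0 < c) :
    ∃ N r, d ≤ N ∧ r < (N + 1).choose d ∧ c = (N + 1).choose (d + 1) + r := by
  induction c, hc using Nat.le_induction with
  | base => exact ⟨d, 0, le_rfl, Nat.choose_pos d.le_succ, by simp⟩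
  | succ c _ ih =>
    obtain ⟨N, r, hdN, hr, rfl⟩ := ih
    rcases (Nat.succ_le_of_lt hr).lt_or_eq with h | h
    · exact ⟨N, r + 1, hdN, h, rfl⟩
    · refine ⟨N + 1, 0, by omega, ?_, ?_⟩
      · exact (Nat.zero_lt_succ r).trans_le (h.le.trans (Nat.choose_le_choose d (Nat.le_succ _)))
      · rw [Nat.choose_succ_succ' (N + 1)]
        omega

theorem greenBound_one (c : ℕ) : greenBound 1 c = c - 1 := by
  cases c with
  | zero => exact greenBound_zero_right 1
  | succ c => simpa using greenBound_choose 1 c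

theorem greenBound_succ_bounds (d c : ℕ) :
    greenBound d c ≤ greenBound d (c + 1) ∧ greenBound d (c + 1) ≤ greenBound d c + 1 := by
  induction d generalizing c with
  | zero => simp [greenBound]
  | succ d ih =>
    rcases c.eq_zero_or_pos with rfl | hc
    · have := greenBound_choose (d + 1) d
      rw [Nat.choose_self, Nat.choose_succ_self] at this
      simp [greenBound_zero_right, this]
    · obtain ⟨N, r, -, hr, rfl⟩ := exists_eq_choose_add d hc
      rw [add_assoc, greenBound_choose_add hr.le, @greenBound_choose_add d N (r + 1) hr]
      have := ih r
      omega

theorem greenBound_mono (d : ℕ) : Monotone (greenBound d) :=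
  monotone_nat_of_le_succ fun c ↦ (greenBound_succ_bounds d c).1

theorem greenBound_add_le (d c k : ℕ) : greenBound d (c + k) ≤ greenBound d c + k := by
  induction k with
  | zero => rfl
  | succ k ih =>
    have := (greenBound_succ_bounds d (c + k)).2
    rw [← add_assoc]
    omega

theorem greenBound_le_self (d c : ℕ) : greenBound d c ≤ c := by
  simpa [greenBound_zero_right] using greenBound_add_le d 0 c

theorem greenBound_lt_choose (hdN : d ≤ N) (hr : r < (N + 1).choose d) :
    greenBound d r < N.choose d := by
  induction d generalizing N r with
  | zero => simpa [greenBound] using hr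
  | succ d ih =>
    obtain ⟨M, rfl⟩ := Nat.exists_eq_succ_of_ne_zero (show N ≠ 0 by omega)
    have hpos : 0 < (M + 1).choose d := Nat.choose_pos (by omega)
    rw [Nat.choose_succ_succ'] at hr
    calc greenBound (d + 1) r
        ≤ greenBound (d + 1) ((M + 1).choose (d + 1) + ((M + 1).choose d - 1)) :=
          greenBound_mono _ (by omega)
      _ = M.choose (d + 1) + greenBound d ((M + 1).choose d - 1) :=
          greenBound_choose_add (Nat.sub_le _ _)
      _ < M.choose (d + 1) + M.choose d := by
          gcongr
          exact ih (by omega) (by omega)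
      _ = (M + 1).choose (d + 1) := by rw [Nat.choose_succ_succ', Nat.add_comm]

theorem le_choose_add_greenBound (hr : r ≤ (N + 1).choose (d + 1)) :
    r ≤ N.choose d + greenBound (d + 1) r := by
  have lipschitz := greenBound_add_le (d + 1) r ((N + 1).choose (d + 1) - r)
  rw [Nat.add_sub_cancel' hr, greenBound_choose] at lipschitz
  have pascal := Nat.choose_succ_succ' N d
  omega

theorem exists_le_greenBound_add {s t : ℕ} (hs : s ≤ (N + 1).choose (d + 1))
    (h : N.choose (d + 1) + s ≤
      greenBound (d + 1) ((N + 1).choose (d + 1) + t) + greenBound (d + 1) s) :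
    ∃ u ≤ t, u ≤ (N + 1).choose d ∧ s ≤ greenBound d u + greenBound (d + 1) s := by
  rcases le_total t ((N + 1).choose d) with ht | ht
  · rw [greenBound_choose_add ht] at h
    exact ⟨t, le_rfl, ht, by omega⟩
  · refine ⟨(N + 1).choose d, ht, le_rfl, ?_⟩
    rw [greenBound_choose]
    exact le_choose_add_greenBound hs

theorem le_greenBound_add (h : a ≤ greenBound d b + greenBound (d + 1) a) :
    a ≤ greenBound (d + 1) (a + b) := by
  induction d generalizing a b with
  | zero =>
    rw [greenBound, greenBound_one] at h
    rw [greenBound_one]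
    omega
  | succ d ih =>
    rcases a.eq_zero_or_pos with rfl | ha
    · exact Nat.zero_le _
    obtain ⟨N, s, hdN, hs, rfl⟩ := exists_eq_choose_add (d + 1) ha
    have pascal := Nat.choose_succ_succ' N (d + 1)
    rw [greenBound_choose_add hs.le] at h
    have hb : (N + 1).choose (d + 1) ≤ b := by
      by_contra! hb
      have := greenBound_lt_choose hdN hb
      have := greenBound_le_self (d + 1) s
      omega
    obtain ⟨t, rfl⟩ := Nat.exists_eq_add_of_le hb
    obtain ⟨u, hut, hu, key⟩ := exists_le_greenBound_add (t := t) hs.le (by omega)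
    have hsu : s + u ≤ (N + 1 + 1).choose (d + 1) := by
      rw [Nat.choose_succ_succ' (N + 1)]
      omega
    calc (N + 1).choose (d + 1 + 1) + s
      _ ≤ (N + 1).choose (d + 1 + 1) + greenBound (d + 1) (s + u) := by
          gcongr
          exact ih key
      _ = greenBound (d + 1 + 1) ((N + 1 + 1).choose (d + 1 + 1) + (s + u)) :=
          (greenBound_choose_add hsu).symm
      _ ≤ _ := greenBound_mono _ (by rw [Nat.choose_succ_succ' (N + 1)]; omega)

end GreenBound

namespace IsMacaulayExpansion

variable {c d : ℕ} {ε : ℕ → ℤ}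

theorem exists_of_succ (h : IsMacaulayExpansion c (d + 1) ε) :
    ∃ r, IsMacaulayExpansion r d ε ∧ c = ((d + 1 : ℕ) + ε (d + 1)).toNat.choose (d + 1) + r := by
  obtain ⟨neg_one_le, mono, hc⟩ := h
  refine ⟨_, ⟨fun i hi hid ↦ neg_one_le i hi (by omega),
    fun i j hi hij hjd ↦ mono i j hi hij (by omega), rfl⟩, ?_⟩
  rw [hc, Finset.sum_Icc_succ_top (by omega), add_comm]

theorem le_choose {m : ℕ} (h : IsMacaulayExpansion c d ε)
    (hm : ∀ i, 1 ≤ i → i ≤ d → ε i < m) : c ≤ (d + m).choose d := by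
  induction d generalizing c with
  | zero => simp [h.2.2]
  | succ d ih =>
    obtain ⟨r, hr, rfl⟩ := h.exists_of_succ
    have lead : ((d + 1 : ℕ) + ε (d + 1)).toNat.choose (d + 1) ≤ (d + m).choose (d + 1) := by
      have := hm (d + 1) (by omega) le_rfl
      exact Nat.choose_le_choose _ (by omega)
    have tail := ih hr fun i hi hid ↦ hm i hi (by omega)
    rw [Nat.add_right_comm, Nat.choose_succ_succ']
    omega

theorem greenBound_eq (h : IsMacaulayExpansion c d ε) :
    greenBound d c = ∑ i ∈ Finset.Icc 1 d, ((i : ℤ) + ε i - 1).toNat.choose i := by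
  induction d generalizing c with
  | zero => simp [h.2.2, greenBound]
  | succ d ih =>
    obtain ⟨r, hr, hc⟩ := h.exists_of_succ
    have hlead := h.1 (d + 1) (by omega) le_rfl
    obtain ⟨m, hm⟩ : ∃ m : ℕ, ε (d + 1) + 1 = m := Int.eq_ofNat_of_zero_le (by omega)
    have hrm : r ≤ (d + m).choose d := hr.le_choose fun i hi hid ↦ by
      have := h.2.1 i (d + 1) hi (by omega) le_rfl
      omega
    rw [show ((d + 1 : ℕ) + ε (d + 1)).toNat = d + m by omega] at hc
    rw [Finset.sum_Icc_succ_top (by omega), ← ih hr,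
      show ((d + 1 : ℕ) + ε (d + 1) - 1).toNat = d + m - 1 by omega, hc]
    rcases (d + m).eq_zero_or_pos with h0 | hpos
    · obtain ⟨rfl, rfl⟩ : d = 0 ∧ m = 0 := by omega
      have : r = 0 := by simpa using hr.2.2
      simp [this, greenBound_zero_right]
    · obtain ⟨N, hN⟩ := Nat.exists_eq_succ_of_ne_zero hpos.ne'
      rw [hN] at hrm ⊢
      rw [greenBound_choose_add hrm, add_comm, Nat.succ_sub_one]

/-- Pascal's rule applies to each term of the expansion except a last term `C(0, 1)`, which occurs
when `ε 1 = -1`. -/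
theorem eq_greenBound_add_sum (h : IsMacaulayExpansion c d ε) (hd : 1 ≤ d) :
    c = greenBound d c + (if 0 ≤ ε 1 then 1 else 0) +
      ∑ i ∈ Finset.Icc 2 d, ((i : ℤ) + ε i - 1).toNat.choose (i - 1) := by
  have pascal : ∀ i ∈ Finset.Icc 2 d, ((i : ℤ) + ε i).toNat.choose i =
      ((i : ℤ) + ε i - 1).toNat.choose (i - 1) + ((i : ℤ) + ε i - 1).toNat.choose i := by
    intro i hi
    obtain ⟨h2, hid⟩ := Finset.mem_Icc.1 hi
    have := h.1 i (by omega) hid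
    rw [show ((i : ℤ) + ε i).toNat = ((i : ℤ) + ε i - 1).toNat + 1 by omega]
    exact Nat.choose_eq_choose_pred_add (by omega) (by omega)
  have last : ((1 : ℕ) + ε 1).toNat.choose 1 =
      ((1 : ℕ) + ε 1 - 1).toNat.choose 1 + if 0 ≤ ε 1 then 1 else 0 := by
    have := h.1 1 le_rfl hd
    simp only [Nat.choose_one_right]
    split_ifs <;> omega
  have split_first (f : ℕ → ℕ) : ∑ i ∈ Finset.Icc 1 d, f i = f 1 + ∑ i ∈ Finset.Icc 2 d, f i :=
    (Finset.add_sum_Ioc_eq_sum_Icc hd).symm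
  calc c = ∑ i ∈ Finset.Icc 1 d, ((i : ℤ) + ε i).toNat.choose i := h.2.2
    _ = greenBound d c + (if 0 ≤ ε 1 then 1 else 0) +
        ∑ i ∈ Finset.Icc 2 d, ((i : ℤ) + ε i - 1).toNat.choose (i - 1) := by
      rw [h.greenBound_eq, split_first, split_first, last, Finset.sum_congr rfl pascal,
        Finset.sum_add_distrib]
      omega

end IsMacaulayExpansion

section LinearAlgebra

open Module

variable {K V V' W : Type*} [Field K] [AddCommGroup V] [Module K V] [AddCommGroup V'] [Module K V']
  [AddCommGroup W] [Module K W]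

theorem finrank_inf_ker_add_finrank_map (U : Submodule K V) [FiniteDimensional K U]
    (f : V →ₗ[K] V') :
    finrank K (U ⊓ LinearMap.ker f : Submodule K V) + finrank K (U.map f) = finrank K U := by
  rw [← (f.domRestrict U).finrank_range_add_finrank_ker, LinearMap.range_domRestrict,
    LinearMap.ker_domRestrict, ← Submodule.finrank_map_subtype_eq, Submodule.map_comap_subtype,
    add_comm]

theorem finite_setOf_not_injective_id_add_smul [FiniteDimensional K V] (f : Module.End K V) :
    {t : K | ¬ Function.Injective (LinearMap.id + t • f : V →ₗ[K] V)}.Finite := by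
  refine ((f.finite_hasEigenvalue).preimage (f := fun t : K ↦ -t⁻¹)
    (neg_injective.comp inv_injective).injOn).subset fun t ht ↦ ?_
  obtain ⟨v, hv, hv0⟩ : ∃ v, v + t • f v = 0 ∧ v ≠ 0 := by
    simpa [← LinearMap.ker_eq_bot, LinearMap.ker_eq_bot'] using ht
  have ht0 : t ≠ 0 := by
    rintro rfl
    simp [hv0] at hv
  refine End.hasEigenvalue_of_hasEigenvector (x := v) ⟨End.mem_eigenspace_iff.2 ?_, hv0⟩
  rw [neg_smul, ← smul_right_inj ht0, smul_neg, smul_inv_smul₀ ht0]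
  exact eq_neg_of_add_eq_zero_right hv

/-- Composing `f + t • g` with a section of `f` over `U.map f` and a projection onto `U.map f`
gives an endomorphism `id + t • h`, which is injective for all but finitely many `t`. -/
theorem finite_setOf_finrank_map_add_smul_lt (U : Submodule K V) [FiniteDimensional K U]
    (f g : V →ₗ[K] V') :
    {t : K | finrank K (U.map (f + t • g)) < finrank K (U.map f)}.Finite := by
  obtain ⟨s, hs⟩ := (f.submoduleMap U).exists_rightInverse_of_surjective
    (LinearMap.range_eq_top.2 (f.submoduleMap_surjective U))
  obtain ⟨p, hp⟩ := (U.map f).subtype.exists_leftInverse_of_injective (U.map f).ker_subtype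
  have hfs (y : U.map f) : f (s y) = y := congrArg Subtype.val (LinearMap.congr_fun hs y)
  refine (finite_setOf_not_injective_id_add_smul
    (p ∘ₗ g ∘ₗ U.subtype ∘ₗ s)).subset fun t ht hinj ↦ (Set.mem_ofPred.1 ht).not_ge ?_
  have hcomp : p ∘ₗ (U.map (f + t • g)).subtype ∘ₗ (f + t • g).submoduleMap U ∘ₗ s =
      LinearMap.id + t • (p ∘ₗ g ∘ₗ U.subtype ∘ₗ s) := by
    ext y
    have hpy : p y = y := LinearMap.congr_fun hp y
    simp [hfs, hpy]
  refine LinearMap.finrank_le_finrank_of_injective (f := (f + t • g).submoduleMap U ∘ₗ s) ?_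
  rw [← hcomp] at hinj
  exact Function.Injective.of_comp (f := p ∘ₗ (U.map (f + t • g)).subtype) hinj

/-- A general member of the pencil `w₁ + t • w₂` does at least as well as `w₁` on `U₁` and
as `w₂` on `U₂`. -/
theorem exists_finrank_inf_ker_le_and_le [Infinite K] (D : W →ₗ[K] V →ₗ[K] V')
    (U₁ U₂ : Submodule K V) [FiniteDimensional K U₁] [FiniteDimensional K U₂] (w₁ w₂ : W) :
    ∃ w, finrank K (U₁ ⊓ LinearMap.ker (D w) : Submodule K V) ≤
        finrank K (U₁ ⊓ LinearMap.ker (D w₁) : Submodule K V) ∧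
      finrank K (U₂ ⊓ LinearMap.ker (D w) : Submodule K V) ≤
        finrank K (U₂ ⊓ LinearMap.ker (D w₂) : Submodule K V) := by
  have bad₁ := finite_setOf_finrank_map_add_smul_lt U₁ (D w₁) (D w₂)
  have bad₂ := (finite_setOf_finrank_map_add_smul_lt U₂ (D w₂) (D w₁)).preimage
    (f := fun t : K ↦ t⁻¹) inv_injective.injOn
  obtain ⟨t, ht⟩ := ((bad₁.union bad₂).union (Set.finite_singleton 0)).infinite_compl.nonempty
  simp only [Set.mem_compl_iff, Set.mem_union, Set.mem_ofPred_eq, Set.mem_preimage,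
    Set.mem_singleton_iff, not_or, not_lt] at ht
  obtain ⟨⟨h₁, h₂⟩, ht0⟩ := ht
  have hD : D (w₁ + t • w₂) = D w₁ + t • D w₂ := by simp
  have hker : LinearMap.ker (D w₂ + t⁻¹ • D w₁) = LinearMap.ker (D (w₁ + t • w₂)) := by
    rw [← LinearMap.ker_smul _ t ht0, smul_add, smul_inv_smul₀ ht0, hD, add_comm]
  refine ⟨w₁ + t • w₂, ?_, ?_⟩
  · rw [hD]
    have := finrank_inf_ker_add_finrank_map U₁ (D w₁)
    have := finrank_inf_ker_add_finrank_map U₁ (D w₁ + t • D w₂)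
    omega
  · rw [← hker]
    have := finrank_inf_ker_add_finrank_map U₂ (D w₂)
    have := finrank_inf_ker_add_finrank_map U₂ (D w₂ + t⁻¹ • D w₁)
    omega

section DualAnnihilator

variable {J U : Submodule K V} [FiniteDimensional K U]

theorem finiteDimensional_dualAnnihilator_of_sup_eq_top (hJU : J ⊔ U = ⊤) :
    FiniteDimensional K J.dualAnnihilator := by
  have surj : Function.Surjective (J.mkQ.domRestrict U) := by
    rw [← LinearMap.range_eq_top, LinearMap.range_domRestrict, J.map_mkQ_eq_top, hJU]
  have := Module.Finite.of_surjective _ surj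
  exact Module.Finite.equiv J.dualQuotEquivDualAnnihilator

theorem finrank_dualAnnihilator_of_sup_eq_top (hJU : J ⊔ U = ⊤) :
    finrank K J.dualAnnihilator = finrank K U - finrank K (J ⊓ U : Submodule K V) := by
  have rank_nullity := finrank_inf_ker_add_finrank_map U J.mkQ
  rw [J.ker_mkQ, (J.map_mkQ_eq_top U).2 hJU, finrank_top, inf_comm] at rank_nullity
  rw [← J.dualQuotEquivDualAnnihilator.finrank_eq, Subspace.dual_finrank_eq]
  omega

end DualAnnihilator

end LinearAlgebra

section InverseSystem

open Module

variable {K V W : Type*} [Field K] [AddCommGroup V] [Module K V] [AddCommGroup W] [Module K W]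

/-- The formal properties of a Macaulay inverse system. The linear forms `w : W` act on `V` by
commuting operators `D w`, which lower the degree of the graded pieces `P k`, and an element of
positive degree killed by all linear forms vanishes. -/
structure IsInverseSystem (D : W →ₗ[K] End K V) (P : ℕ → Submodule K V) : Prop where
  commute : ∀ w w', Commute (D w) (D w')
  apply_mem : ∀ {k v}, v ∈ P (k + 1) → ∀ w, D w v ∈ P k
  eq_zero_of_forall_apply : ∀ {k v}, v ∈ P (k + 1) → (∀ w, D w v = 0) → v = 0

theorem finrank_inf_ker_le_of_commute {f g : End K V} (hfg : Commute f g) (U : Submodule K V)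
    [FiniteDimensional K U] :
    finrank K (U ⊓ LinearMap.ker g : Submodule K V) ≤
      finrank K (U.map f ⊓ LinearMap.ker g : Submodule K V) +
        finrank K (U ⊓ LinearMap.ker f ⊓ LinearMap.ker g : Submodule K V) := by
  have rank_nullity := finrank_inf_ker_add_finrank_map (U ⊓ LinearMap.ker g) f
  have map_le : (U ⊓ LinearMap.ker g).map f ≤ U.map f ⊓ LinearMap.ker g := by
    rintro _ ⟨v, ⟨hvU, hvg⟩, rfl⟩
    refine ⟨Submodule.mem_map_of_mem hvU, ?_⟩
    rw [SetLike.mem_coe, LinearMap.mem_ker] at hvg ⊢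
    rw [← Module.End.mul_apply, ← hfg.eq, Module.End.mul_apply, hvg, map_zero]
  have := Submodule.finrank_mono map_le
  rw [inf_right_comm] at rank_nullity
  omega

namespace IsInverseSystem

variable {D : W →ₗ[K] End K V} {P : ℕ → Submodule K V}

theorem exists_finrank_inf_ker_lt (h : IsInverseSystem D P) {k : ℕ} {U : Submodule K V}
    [FiniteDimensional K U] (hU : U ≤ P (k + 1)) (hU0 : U ≠ ⊥) :
    ∃ w, finrank K (U ⊓ LinearMap.ker (D w) : Submodule K V) < finrank K U := by
  obtain ⟨v, hvU, hv0⟩ := U.ne_bot_iff.1 hU0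
  obtain ⟨w, hw⟩ : ∃ w, D w v ≠ 0 := by
    by_contra! hv
    exact hv0 (h.eq_zero_of_forall_apply (hU hvU) hv)
  exact ⟨w, Submodule.finrank_lt_finrank_of_lt (inf_lt_left.2 fun hle ↦ hw (hle hvU))⟩

/-- Green's hyperplane restriction theorem, in dual form. If `l` is a linear form minimizing
`a = dim (U ⊓ ker (D l))` and `b = dim U - a`, then induction for `U ⊓ ker (D l)` and `U.map (D l)`
yields `a ≤ b_{<d>} + a_{<d+1>}`. -/
theorem exists_finrank_inf_ker_le [Infinite K] (h : IsInverseSystem D P) (d : ℕ)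
    (U : Submodule K V) [FiniteDimensional K U] (hU : U ≤ P d) :
    ∃ w, finrank K (U ⊓ LinearMap.ker (D w) : Submodule K V) ≤ greenBound d (finrank K U) := by
  induction d generalizing U with
  | zero => exact ⟨0, Submodule.finrank_mono inf_le_left⟩
  | succ d ih =>
    induction hn : finrank K U using Nat.strong_induction_on generalizing U with
    | _ n ih_dim =>
    subst hn
    rcases eq_or_ne U ⊥ with rfl | hU0
    · exact ⟨0, (Submodule.finrank_mono inf_le_left).trans (by simp)⟩
    let dimKer (w : W) : ℕ := finrank K (U ⊓ LinearMap.ker (D w) : Submodule K V)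
    let l := Function.argmin dimKer
    have l_min (w : W) : dimKer l ≤ dimKer w := Function.argmin_le dimKer w
    obtain ⟨w₀, hw₀⟩ := h.exists_finrank_inf_ker_lt hU hU0
    obtain ⟨w₁, hw₁⟩ := ih_dim _ ((l_min w₀).trans_lt hw₀) (U ⊓ LinearMap.ker (D l))
      (inf_le_left.trans hU) rfl
    obtain ⟨w₂, hw₂⟩ := ih (U.map (D l))
      (Submodule.map_le_iff_le_comap.2 fun v hv ↦ h.apply_mem (hU hv) l)
    obtain ⟨w, hww₁, hww₂⟩ := exists_finrank_inf_ker_le_and_le D (U ⊓ LinearMap.ker (D l))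
      (U.map (D l)) w₁ w₂
    have key := calc dimKer l
      _ ≤ dimKer w := l_min w
      _ ≤ finrank K (U.map (D l) ⊓ LinearMap.ker (D w) : Submodule K V) +
            finrank K (U ⊓ LinearMap.ker (D l) ⊓ LinearMap.ker (D w) : Submodule K V) :=
          finrank_inf_ker_le_of_commute (h.commute l w) U
      _ ≤ greenBound d (finrank K (U.map (D l))) + greenBound (d + 1) (dimKer l) :=
          add_le_add (hww₂.trans hw₂) (hww₁.trans hw₁)
    refine ⟨l, (le_greenBound_add key).trans_eq ?_⟩
    rw [finrank_inf_ker_add_finrank_map U (D l)]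

end IsInverseSystem

end InverseSystem

section HilbertFunction

open Module

attribute [local instance] MvPolynomial.gradedAlgebra

variable {σ K : Type*} [Field K]

/-- The Hilbert function `k ↦ dim S_k - dim (I ∩ S_k)` of an ideal `I` of the polynomial ring
`S = K[σ]`. For infinite `σ` the dimensions are junk values. -/
noncomputable def hilbertFunction (I : Ideal (MvPolynomial σ K)) (k : ℕ) : ℕ :=
  finrank K (homogeneousSubmodule σ K k) -
    finrank K (I.restrictScalars K ⊓ homogeneousSubmodule σ K k :
      Submodule K (MvPolynomial σ K))

/-- The degree `k` piece of the Macaulay inverse system of an ideal `I`: the linear functionals on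
the polynomial ring that vanish on `I` and on all homogeneous polynomials of degree other
than `k`. -/
noncomputable def inverseSystem (I : Ideal (MvPolynomial σ K)) (k : ℕ) :
    Submodule K (Dual K (MvPolynomial σ K)) :=
  (I.restrictScalars K ⊔ LinearMap.ker (homogeneousComponent k)).dualAnnihilator

variable (σ K) in
/-- The contraction action of linear forms on functionals, `ℓ ↦ (φ ↦ φ (ℓ * ·))`. -/
noncomputable def contraction :
    homogeneousSubmodule σ K 1 →ₗ[K] End K (Dual K (MvPolynomial σ K)) :=
  Dual.transpose ∘ₗ LinearMap.mul K (MvPolynomial σ K) ∘ₗ (homogeneousSubmodule σ K 1).subtype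

theorem contraction_apply_apply (ℓ : homogeneousSubmodule σ K 1)
    (φ : Dual K (MvPolynomial σ K)) (f : MvPolynomial σ K) :
    contraction σ K ℓ φ f = φ (ℓ * f) :=
  rfl

theorem coe_decompose_eq_homogeneousComponent (f : MvPolynomial σ K) (k : ℕ) :
    (DirectSum.decompose (homogeneousSubmodule σ K) f k : MvPolynomial σ K) =
      homogeneousComponent k f :=
  decomposition.decompose'_apply f k

theorem homogeneousComponent_succ_mul {ℓ : MvPolynomial σ K}
    (hℓ : ℓ ∈ homogeneousSubmodule σ K 1) (k : ℕ) (f : MvPolynomial σ K) :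
    homogeneousComponent (k + 1) (ℓ * f) = ℓ * homogeneousComponent k f := by
  rw [← coe_decompose_eq_homogeneousComponent, ← coe_decompose_eq_homogeneousComponent, add_comm k,
    DirectSum.coe_decompose_mul_add_of_left_mem _ hℓ]

theorem isProj_homogeneousComponent (k : ℕ) :
    LinearMap.IsProj (homogeneousSubmodule σ K k) (homogeneousComponent k) where
  map_mem := homogeneousComponent_mem k
  map_id _ hf := homogeneousComponent_eq_self hf

theorem sup_ker_homogeneousComponent_sup_homogeneousSubmodule
    (J : Submodule K (MvPolynomial σ K)) (k : ℕ) :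
    J ⊔ LinearMap.ker (homogeneousComponent k) ⊔ homogeneousSubmodule σ K k = ⊤ := by
  rw [sup_assoc, sup_comm (LinearMap.ker _), (isProj_homogeneousComponent k).isCompl.sup_eq_top,
    sup_top_eq]

theorem sup_ker_homogeneousComponent_inf_homogeneousSubmodule {I : Ideal (MvPolynomial σ K)}
    (hI : I.IsHomogeneous (homogeneousSubmodule σ K)) (k : ℕ) :
    (I.restrictScalars K ⊔ LinearMap.ker (homogeneousComponent k)) ⊓ homogeneousSubmodule σ K k =
      I.restrictScalars K ⊓ homogeneousSubmodule σ K k := by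
  refine le_antisymm ?_ (inf_le_inf_right _ le_sup_left)
  rintro f ⟨hf, hfk⟩
  refine ⟨?_, hfk⟩
  obtain ⟨a, ha, b, hb, rfl⟩ := Submodule.mem_sup.1 hf
  have hab : homogeneousComponent k a = a + b := by
    rw [← (isProj_homogeneousComponent k).map_id _ hfk, map_add, LinearMap.mem_ker.1 hb, add_zero]
  rw [← hab]
  exact homogeneousComponent_mem_of_mem hI ha k

theorem isInverseSystem_inverseSystem (I : Ideal (MvPolynomial σ K)) :
    IsInverseSystem (contraction σ K) (inverseSystem I) where
  commute ℓ ℓ' := by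
    ext φ f
    simp [contraction_apply_apply, mul_left_comm]
  apply_mem {k φ} hφ ℓ := by
    rw [inverseSystem, Submodule.mem_dualAnnihilator] at hφ ⊢
    intro f hf
    obtain ⟨a, ha, b, hb, rfl⟩ := Submodule.mem_sup.1 hf
    rw [contraction_apply_apply, mul_add]
    refine hφ _ (Submodule.add_mem_sup (I.mul_mem_left _ ha) ?_)
    rw [LinearMap.mem_ker, homogeneousComponent_succ_mul ℓ.2, LinearMap.mem_ker.1 hb, mul_zero]
  eq_zero_of_forall_apply {k φ} hφ hcontr := by
    rw [inverseSystem, Submodule.mem_dualAnnihilator] at hφ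
    have map_X_mul (i : σ) (f : MvPolynomial σ K) : φ (X i * f) = 0 :=
      LinearMap.congr_fun (hcontr ⟨X i, isHomogeneous_X K i⟩) f
    ext m
    change φ (monomial m 1) = 0
    rcases eq_or_ne m 0 with rfl | hm
    · refine hφ _ (Submodule.mem_sup_right ?_)
      rw [LinearMap.mem_ker, ← C_apply, C_1, homogeneousComponent_of_mem (isHomogeneous_one σ K),
        if_neg k.succ_ne_zero]
    · obtain ⟨i, hi⟩ := Finsupp.ne_iff.1 hm
      have hX : monomial m (1 : K) = X i * monomial (m - Finsupp.single i 1) 1 := by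
        rw [X, monomial_mul, one_mul, add_tsub_cancel_of_le]
        exact Finsupp.single_le_iff.2 (Nat.one_le_iff_ne_zero.2 hi)
      rw [hX, map_X_mul]

section Finite

variable [Finite σ] (I : Ideal (MvPolynomial σ K)) (k d : ℕ)

instance finiteDimensional_homogeneousSubmodule :
    FiniteDimensional K (homogeneousSubmodule σ K k) :=
  Module.Finite.iff_fg.2 (homogeneousSubmodule_fg σ K k)

instance finiteDimensional_inverseSystem : FiniteDimensional K (inverseSystem I k) :=
  finiteDimensional_dualAnnihilator_of_sup_eq_top
    (sup_ker_homogeneousComponent_sup_homogeneousSubmodule _ k)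

variable {I}

theorem finrank_inverseSystem (hI : I.IsHomogeneous (homogeneousSubmodule σ K)) :
    finrank K (inverseSystem I k) = hilbertFunction I k := by
  rw [inverseSystem, finrank_dualAnnihilator_of_sup_eq_top
    (sup_ker_homogeneousComponent_sup_homogeneousSubmodule _ k),
    sup_ker_homogeneousComponent_inf_homogeneousSubmodule hI, hilbertFunction]

theorem hilbertFunction_succ_le [Infinite K] (hI : I.IsHomogeneous (homogeneousSubmodule σ K)) :
    hilbertFunction I (d + 1) ≤
      greenBound (d + 1) (hilbertFunction I (d + 1)) + hilbertFunction I d := by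
  have hP := isInverseSystem_inverseSystem I
  obtain ⟨ℓ, hℓ⟩ := hP.exists_finrank_inf_ker_le (d + 1) (inverseSystem I (d + 1)) le_rfl
  have map_le : (inverseSystem I (d + 1)).map (contraction σ K ℓ) ≤ inverseSystem I d :=
    Submodule.map_le_iff_le_comap.2 fun φ hφ ↦ hP.apply_mem hφ ℓ
  simp only [← finrank_inverseSystem _ hI]
  calc finrank K (inverseSystem I (d + 1))
    _ = _ := (finrank_inf_ker_add_finrank_map _ (contraction σ K ℓ)).symm
    _ ≤ _ := add_le_add hℓ (Submodule.finrank_mono map_le)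

theorem hilbert_fn_lower_bound_below_general [Infinite K] {d : ℕ} (hd : 1 ≤ d)
    (hI : I.IsHomogeneous (homogeneousSubmodule σ K)) {ε : ℕ → ℤ}
    (hε : IsMacaulayExpansion (hilbertFunction I d) d ε) :
    ∑ i ∈ Finset.Icc 2 d, ((i : ℤ) + ε i - 1).toNat.choose (i - 1) ≤ hilbertFunction I (d - 1) ∧
      (0 ≤ ε 1 → ∑ i ∈ Finset.Icc 2 d, ((i : ℤ) + ε i - 1).toNat.choose (i - 1) <
        hilbertFunction I (d - 1)) := by
  have green := hilbertFunction_succ_le (d - 1) hI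
  rw [Nat.sub_add_cancel hd] at green
  have expansion := hε.eq_greenBound_add_sum hd
  refine ⟨by omega, fun h ↦ ?_⟩
  rw [if_pos h] at expansion
  omega

end Finite

theorem IsHomogeneousIdeal.isHomogeneous {n : ℕ} {I : Ideal (MvPolynomial (Fin (n + 1)) ℂ)}
    (hI : IsHomogeneousIdeal I) :
    I.IsHomogeneous (homogeneousSubmodule (Fin (n + 1)) ℂ) := fun k f hf ↦ by
  rw [coe_decompose_eq_homogeneousComponent]
  exact hI f hf k

end HilbertFunction

/-- If `I` is a homogeneous ideal, `d ≥ 2`, `c = h_I(d)` with Macaulay expansion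
`(ε_d,…,ε_1)` in base `d`, then `h_I(d-1) ≥ c_{*d} = ∑_{i=2}^d C(i+ε_i-1, i-1)`,
with strict inequality when `ε_1 ≥ 0`. -/
theorem hilbert_fn_lower_bound_below (n d : ℕ) (hd : 2 ≤ d)
    (I : Ideal (MvPolynomial (Fin (n + 1)) ℂ)) (hI : IsHomogeneousIdeal I)
    (c : ℕ) (hc : c = hilbertFn I d)
    (ε : ℕ → ℤ) (hε : IsMacaulayExpansion c d ε) :
    hilbertFn I (d - 1) ≥ ∑ i ∈ Finset.Icc 2 d, (((i : ℤ) + ε i - 1).toNat).choose (i - 1) ∧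
    (0 ≤ ε 1 →
      hilbertFn I (d - 1) > ∑ i ∈ Finset.Icc 2 d, (((i : ℤ) + ε i - 1).toNat).choose (i - 1)) := by
  subst hc
  exact hilbert_fn_lower_bound_below_general (by omega) hI.isHomogeneous hε
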